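/- For every finite simple graph G with at least 2 vertices, (1/72)·rankwidth(G) ≤ max over induced subgraphs H of G with at least 2 vertices of min-bal-cutrank(H) ≤ rankwidth(G). -/

import Mathlib

open Classical

/-- The cutrank of a pair of vertex sets `X`, `Y` in a graph `G`:
the rank over `𝔽₂` of the `X × Y` biadjacency matrix. -/
noncomputable def cutrank {V : Type*} (G : SimpleGraph V) (X Y : Finset V) : ℕ :=
  Matrix.rank (Matrix.of fun (x : X) (y : Y) => if G.Adj x.1 y.1 then (1 : ZMod 2) else 0)


/-- `(X, Y)` is a balanced partition of the vertex set `S`: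
`X ⊔ Y = S` and both parts have size at most `(2/3)|S|`. -/
def IsBalancedPartitionOf {V : Type*} (S X Y : Finset V) : Prop :=
  X ∪ Y = S ∧ Disjoint X Y ∧ 3 * X.card ≤ 2 * S.card ∧ 3 * Y.card ≤ 2 * S.card

/-- The minimum balanced cutrank of the induced subgraph `G[S]`:
the minimum of `cutrank G X Y` over balanced partitions `(X, Y)` of `S`.
(For `X, Y ⊆ S`, the biadjacency matrix in `G[S]` coincides with that in `G`.) -/
noncomputable def minBalCutrank {V : Type*} (G : SimpleGraph V) (S : Finset V) : ℕ :=
  sInf {k | ∃ X Y : Finset V, IsBalancedPartitionOf S X Y ∧ cutrank G X Y = k}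

/-- A rank-decomposition of a graph on vertex type `V`: a subcubic tree
together with a bijection from `V` to the leaves (degree-1 vertices) of the tree. -/
structure RankDecomp (V : Type*) [Fintype V] where
  n : ℕ
  tree : SimpleGraph (Fin n)
  isTree : tree.IsTree
  subcubic : ∀ t : Fin n, tree.degree t ≤ 3
  leaf : V → Fin n
  leafDeg : ∀ v : V, tree.degree (leaf v) = 1
  leafInj : Function.Injective leaf
  leafSurj : ∀ t : Fin n, tree.degree t = 1 → ∃ v : V, leaf v = t

/-- The side of the edge `{u, v}` of the decomposition tree containing `u`:
all vertices of `G` whose leaf lies in the component of `u` after deleting the edge. -/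
noncomputable def RankDecomp.side {V : Type*} [Fintype V] (d : RankDecomp V) (u v : Fin d.n) :
    Finset V :=
  Finset.univ.filter fun x => (d.tree.deleteEdges {s(u, v)}).Reachable (d.leaf x) u

/-- The decomposition `d` has width at most `k` for the graph `G`: every edge of the
tree induces a partition of the vertices of cutrank at most `k`. -/
def RankDecomp.widthLE {V : Type*} [Fintype V] (G : SimpleGraph V) (d : RankDecomp V) (k : ℕ) :
    Prop :=
  ∀ u v : Fin d.n, d.tree.Adj u v → cutrank G (d.side u v) (d.side v u) ≤ k

/-- The rankwidth of `G`: the minimum width of a rank-decomposition of `G`. -/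
noncomputable def rankwidth {V : Type*} [Fintype V] (G : SimpleGraph V) : ℕ :=
  sInf {k | ∃ d : RankDecomp V, RankDecomp.widthLE G d k}

/-!
Let `M` be the maximum of the minimum balanced cutranks, and write `ρ` for the cutrank of a vertex
set with its complement.

For the upper bound on `M`, restrict a rank-decomposition to `S` and orient every tree edge towards
the side holding more than two thirds of `S`. Some vertex of the tree is a sink, and one of its at
most three edges gives a balanced partition of `S`.

For the lower bound, split the vertex set recursively into parts with `ρ ≤ 14 * M`. If a part `X`
with `ρ X = 14 * M` cannot be split, then a row basis `B ⊆ Xᶜ` of the cut between `X` and `Xᶜ` is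
well-linked, and it suffices to see that well-linked sets have fewer than `14 * M` vertices when
`M ≥ 1`; for `M = 0` the graph has no edges. Given such a `B` with at least `14 * M` vertices, call
`U` heavy if it contains more than `ρ U` vertices of `B`, and let `U` minimize `|U| + c * ρ U` among
heavy sets. Minimality provides `D` outside `U` with `|D| ≥ c * ρ U`, each part of which has at most
`c` times as many vertices as its cutrank to the rest of `U ∪ D`. Let `(X, Y)` be a balanced
partition of `U ∪ D` of cutrank at most `M`, with at least half of `B ∩ U` in `X`. By submodularity,
replacing `U` by `X ∩ U` loses `|Y ∩ U|` vertices at a cost of at most `c * M - |Y ∩ D|`. If `X ∩ U`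
is heavy, minimality thus forces `|Y| ≤ c * M`, whence `|U ∪ D| ≤ 3 * c * M` by balance, so that
`|U| + c * ρ U ≤ 3 * c * M`. The bound for `c + 1` keeps `ρ U` small enough for `X ∩ U` to be heavy
in the step for `c`, and for large `c` it holds trivially for the whole vertex set. For `c = 4` it
gives `|B| ≤ |U| + ρ U ≤ 12 * M`, a contradiction.
-/

section LinearAlgebra

variable {K E F₁ F₂ F F' : Type*} [DivisionRing K] [AddCommGroup E] [Module K E]
  [AddCommGroup F₁] [Module K F₁] [AddCommGroup F₂] [Module K F₂]
  [AddCommGroup F] [Module K F] [AddCommGroup F'] [Module K F']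

lemma finrank_map_add_finrank_inf_ker (f : E →ₗ[K] F) (R : Submodule K E) [FiniteDimensional K R] :
    Module.finrank K (R.map f) + Module.finrank K ↥(R ⊓ LinearMap.ker f) = Module.finrank K R := by
  rw [← LinearMap.finrank_range_add_finrank_ker (f.domRestrict R), LinearMap.range_domRestrict,
    LinearMap.ker_domRestrict, ← Submodule.finrank_map_subtype_eq, Submodule.map_comap_subtype]

lemma finrank_map_inf_add_finrank_map_sup_le (R₁ R₂ : Submodule K E)
    [FiniteDimensional K R₁] [FiniteDimensional K R₂]
    {f₁ : E →ₗ[K] F₁} {f₂ : E →ₗ[K] F₂} {f : E →ₗ[K] F} {f' : E →ₗ[K] F'}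
    (hf : LinearMap.ker f₁ ⊓ LinearMap.ker f₂ ≤ LinearMap.ker f)
    (hf' : LinearMap.ker f₁ ⊔ LinearMap.ker f₂ ≤ LinearMap.ker f') :
    Module.finrank K ((R₁ ⊓ R₂).map f) + Module.finrank K ((R₁ ⊔ R₂).map f') ≤
      Module.finrank K (R₁.map f₁) + Module.finrank K (R₂.map f₂) := by
  have hinf : R₁ ⊓ LinearMap.ker f₁ ⊓ (R₂ ⊓ LinearMap.ker f₂) ≤ R₁ ⊓ R₂ ⊓ LinearMap.ker f :=
    inf_inf_inf_comm R₁ _ R₂ _ ▸ inf_le_inf_left _ hf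
  have hsup : R₁ ⊓ LinearMap.ker f₁ ⊔ R₂ ⊓ LinearMap.ker f₂ ≤ (R₁ ⊔ R₂) ⊓ LinearMap.ker f' :=
    le_inf (sup_le_sup inf_le_left inf_le_left) ((sup_le_sup inf_le_right inf_le_right).trans hf')
  have := Submodule.finrank_mono hinf
  have := Submodule.finrank_mono hsup
  have := Submodule.finrank_sup_add_finrank_inf_eq R₁ R₂
  have := Submodule.finrank_sup_add_finrank_inf_eq (R₁ ⊓ LinearMap.ker f₁) (R₂ ⊓ LinearMap.ker f₂)
  have := finrank_map_add_finrank_inf_ker f₁ R₁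
  have := finrank_map_add_finrank_inf_ker f₂ R₂
  have := finrank_map_add_finrank_inf_ker f (R₁ ⊓ R₂)
  have := finrank_map_add_finrank_inf_ker f' (R₁ ⊔ R₂)
  omega

end LinearAlgebra

section Cutrank

variable {V : Type*} (G : SimpleGraph V)

/-- The span of the rows of the adjacency matrix of `G` over `𝔽₂` indexed by `X`. Restricting its
elements to `Y` gives the row space of the `X × Y` biadjacency matrix. -/
def rowSpan (X : Finset V) : Submodule (ZMod 2) (V → ZMod 2) :=
  Submodule.span (ZMod 2) ((G.adjMatrix (ZMod 2)).row '' X)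

instance (X : Finset V) : FiniteDimensional (ZMod 2) (rowSpan G X) :=
  FiniteDimensional.span_of_finite _ (X.finite_toSet.image _)

lemma rowSpan_mono {X X' : Finset V} (h : X ⊆ X') : rowSpan G X ≤ rowSpan G X' :=
  Submodule.span_mono (Set.image_mono h)

lemma rowSpan_union (X X' : Finset V) : rowSpan G (X ∪ X') = rowSpan G X ⊔ rowSpan G X' := by
  rw [rowSpan, Finset.coe_union, Set.image_union, Submodule.span_union, rowSpan, rowSpan]

lemma cutrank_eq_finrank_map_rowSpan (X Y : Finset V) :
    cutrank G X Y = Module.finrank (ZMod 2) ((rowSpan G X).map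
      (LinearMap.funLeft (ZMod 2) (ZMod 2) (Subtype.val : Y → V))) := by
  rw [cutrank, Matrix.rank_eq_finrank_span_row, rowSpan, Submodule.map_span, ← Set.image_comp,
    Set.image_eq_range]
  rfl

lemma mem_ker_funLeft_val {Y : Finset V} {g : V → ZMod 2} :
    g ∈ LinearMap.ker (LinearMap.funLeft (ZMod 2) (ZMod 2) (Subtype.val : Y → V)) ↔
      ∀ y ∈ Y, g y = 0 := by
  simp [LinearMap.mem_ker, funext_iff, LinearMap.funLeft_apply]

lemma cutrank_inter_union_add_cutrank_union_inter_le (X₁ X₂ Y₁ Y₂ : Finset V) :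
    cutrank G (X₁ ∩ X₂) (Y₁ ∪ Y₂) + cutrank G (X₁ ∪ X₂) (Y₁ ∩ Y₂) ≤
      cutrank G X₁ Y₁ + cutrank G X₂ Y₂ := by
  have hmono : rowSpan G (X₁ ∩ X₂) ≤ rowSpan G X₁ ⊓ rowSpan G X₂ :=
    le_inf (rowSpan_mono G Finset.inter_subset_left) (rowSpan_mono G Finset.inter_subset_right)
  rw [cutrank_eq_finrank_map_rowSpan, cutrank_eq_finrank_map_rowSpan G (X₁ ∪ X₂),
    cutrank_eq_finrank_map_rowSpan G X₁, cutrank_eq_finrank_map_rowSpan G X₂, rowSpan_union]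
  refine (Nat.add_le_add_right (Submodule.finrank_mono (Submodule.map_mono hmono)) _).trans
    (finrank_map_inf_add_finrank_map_sup_le _ _ ?_ (sup_le ?_ ?_))
  all_goals intro g; simp only [Submodule.mem_inf, mem_ker_funLeft_val]; grind

lemma cutrank_comm (X Y : Finset V) : cutrank G X Y = cutrank G Y X := by
  rw [cutrank, cutrank, ← Matrix.rank_transpose]
  congr 1
  ext x y
  simp [G.adj_comm]

lemma cutrank_le_card_left (X Y : Finset V) : cutrank G X Y ≤ X.card := by
  simpa [cutrank] using Matrix.rank_le_card_height
    (Matrix.of fun (x : X) (y : Y) => if G.Adj x.1 y.1 then (1 : ZMod 2) else 0)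

@[simp]
lemma cutrank_empty_left (Y : Finset V) : cutrank G ∅ Y = 0 :=
  Nat.le_zero.1 (cutrank_le_card_left G ∅ Y)

@[simp]
lemma cutrank_empty_right (X : Finset V) : cutrank G X ∅ = 0 := by
  rw [cutrank_comm, cutrank_empty_left]

lemma cutrank_mono_right (X : Finset V) {Y Y' : Finset V} (h : Y ⊆ Y') :
    cutrank G X Y ≤ cutrank G X Y' := by
  simpa [Finset.inter_eq_right.2 h] using
    cutrank_inter_union_add_cutrank_union_inter_le G X ∅ Y' Y

lemma cutrank_mono {X X' Y Y' : Finset V} (hX : X ⊆ X') (hY : Y ⊆ Y') :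
    cutrank G X Y ≤ cutrank G X' Y' :=
  (cutrank_mono_right G X hY).trans <| by
    simpa only [cutrank_comm G _ Y'] using cutrank_mono_right G Y' hX

lemma cutrank_union_left_le (X X' Y : Finset V) :
    cutrank G (X ∪ X') Y ≤ cutrank G X Y + cutrank G X' Y := by
  have := cutrank_inter_union_add_cutrank_union_inter_le G X X' Y Y
  rw [Finset.inter_self] at this
  omega

variable {G}

lemma cutrank_eq_zero_iff {X Y : Finset V} :
    cutrank G X Y = 0 ↔ ∀ x ∈ X, ∀ y ∈ Y, ¬ G.Adj x y := by
  rw [cutrank_eq_finrank_map_rowSpan, Submodule.finrank_eq_zero, ← LinearMap.le_ker_iff_map,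
    rowSpan, Submodule.span_le, Set.image_subset_iff]
  simp [Set.subset_def, -LinearMap.mem_ker, mem_ker_funLeft_val]

@[simp]
lemma cutrank_bot (X Y : Finset V) : cutrank (⊥ : SimpleGraph V) X Y = 0 := by
  simp [cutrank_eq_zero_iff]

lemma cutrank_insert_le_of_subset {v : V} {X X' Y Y' : Finset V} (hX : X ⊆ X') (hY : Y' ⊆ Y)
    (h : cutrank G (insert v X) Y ≤ cutrank G X Y) :
    cutrank G (insert v X') Y' ≤ cutrank G X' Y' := by
  have hsub := cutrank_inter_union_add_cutrank_union_inter_le G X' (insert v X) Y' Y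
  rw [Finset.union_insert, Finset.union_eq_left.2 hX, Finset.union_eq_right.2 hY,
    Finset.inter_eq_left.2 hY] at hsub
  have : cutrank G X Y ≤ cutrank G (X' ∩ insert v X) Y :=
    cutrank_mono G (Finset.subset_inter hX (Finset.subset_insert v X)) le_rfl
  omega

lemma cutrank_union_le_of_forall_insert_le {X E Y : Finset V}
    (h : ∀ v ∈ E, cutrank G (insert v X) Y ≤ cutrank G X Y) :
    cutrank G (X ∪ E) Y ≤ cutrank G X Y := by
  induction E using Finset.induction_on with
  | empty => rw [Finset.union_empty]
  | insert v E _ ih =>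
    rw [Finset.union_insert]
    exact (cutrank_insert_le_of_subset Finset.subset_union_left le_rfl
      (h v (Finset.mem_insert_self v E))).trans
      (ih fun x hx => h x (Finset.mem_insert_of_mem hx))

lemma cutrank_eq_card_of_subset {B B' Y : Finset V} (hB : cutrank G B Y = B.card) (h : B' ⊆ B) :
    cutrank G B' Y = B'.card := by
  have hunion := cutrank_union_left_le G B' (B \ B') Y
  rw [Finset.union_sdiff_of_subset h] at hunion
  have := cutrank_le_card_left G (B \ B') Y
  have := cutrank_le_card_left G B' Y
  have := Finset.card_sdiff_add_card_eq_card h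
  omega

variable (G)

lemma exists_subset_cutrank_eq_card (X Y : Finset V) :
    ∃ B ⊆ X, cutrank G B Y = B.card ∧ B.card = cutrank G X Y := by
  obtain ⟨B, hB, hmax⟩ := (X.powerset.filter fun B => cutrank G B Y = B.card).exists_max_image
    Finset.card ⟨∅, by simp⟩
  simp only [Finset.mem_filter, Finset.mem_powerset] at hB hmax
  obtain ⟨hBX, hBcard⟩ := hB
  have hspan : cutrank G (B ∪ X) Y ≤ cutrank G B Y := by
    refine cutrank_union_le_of_forall_insert_le fun v hv => ?_
    by_contra! hlt
    have hvB : v ∉ B := fun hvB => hlt.ne' (by rw [Finset.insert_eq_of_mem hvB])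
    have hcard := Finset.card_insert_of_notMem hvB
    have := cutrank_le_card_left G (insert v B) Y
    have := hmax (insert v B) ⟨Finset.insert_subset hv hBX, by omega⟩
    omega
  rw [Finset.union_eq_right.2 hBX] at hspan
  exact ⟨B, hBX, hBcard, hBcard ▸ (cutrank_mono G hBX le_rfl).antisymm hspan⟩

end Cutrank

section CutrankFun

variable {V : Type*} [Fintype V] (G : SimpleGraph V)

/-- The cut-rank function `ρ` of `G`: the cutrank between a vertex set and its complement. -/
noncomputable def cutrankFun (X : Finset V) : ℕ := cutrank G X Xᶜ

lemma cutrankFun_compl (X : Finset V) : cutrankFun G Xᶜ = cutrankFun G X := by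
  rw [cutrankFun, cutrankFun, compl_compl, cutrank_comm]

lemma cutrankFun_inter_add_cutrankFun_union_le (X₁ X₂ : Finset V) :
    cutrankFun G (X₁ ∩ X₂) + cutrankFun G (X₁ ∪ X₂) ≤ cutrankFun G X₁ + cutrankFun G X₂ := by
  rw [cutrankFun, cutrankFun, Finset.compl_inter, Finset.compl_union]
  exact cutrank_inter_union_add_cutrank_union_inter_le G X₁ X₂ X₁ᶜ X₂ᶜ

end CutrankFun

section EvenlyLinked

variable {V : Type*} (G : SimpleGraph V)

/-- `D` is evenly linked to `U` with multiplicity `c` if each part `Y` of `D` has at most `c` times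
as many vertices as the cutrank separating it from the rest of `U ∪ D`. When `D` has
`c * cutrankFun G U` vertices it is a proxy for the complement of `U`, in which every vertex carries
its fair share of the cutrank of `U`. -/
structure IsEvenlyLinked (c : ℕ) (U D : Finset V) : Prop where
  disjoint : Disjoint U D
  card_le : ∀ Y ⊆ D, Y.card ≤ c * cutrank G Y ((U ∪ D) \ Y)

variable {G} {c : ℕ} {U D : Finset V}

lemma IsEvenlyLinked.card_le_union (hD : IsEvenlyLinked G c U D) {Y₁ Y₂ : Finset V}
    (hY₁ : Y₁ ⊆ D) (htight₁ : c * cutrank G Y₁ ((U ∪ D) \ Y₁) ≤ Y₁.card)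
    (htight₂ : c * cutrank G Y₂ ((U ∪ D) \ Y₂) ≤ Y₂.card) :
    c * cutrank G (Y₁ ∪ Y₂) ((U ∪ D) \ (Y₁ ∪ Y₂)) ≤ (Y₁ ∪ Y₂).card := by
  have hsub := cutrank_inter_union_add_cutrank_union_inter_le G Y₁ Y₂
    ((U ∪ D) \ Y₁) ((U ∪ D) \ Y₂)
  rw [← Finset.sdiff_inter_distrib_right, ← Finset.sdiff_union_distrib] at hsub
  have := Nat.mul_le_mul_left c hsub
  have := hD.card_le (Y₁ ∩ Y₂) (Finset.inter_subset_left.trans hY₁)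
  have := Finset.card_inter_add_card_union Y₁ Y₂
  rw [mul_add, mul_add] at *
  omega

lemma IsEvenlyLinked.exists_isGreatest_tight (hD : IsEvenlyLinked G c U D) :
    ∃ Y, IsGreatest {Y | Y ⊆ D ∧ c * cutrank G Y ((U ∪ D) \ Y) ≤ Y.card} Y := by
  let T := D.powerset.filter fun Y => c * cutrank G Y ((U ∪ D) \ Y) ≤ Y.card
  have hT {Y : Finset V} : Y ∈ T ↔ Y ⊆ D ∧ c * cutrank G Y ((U ∪ D) \ Y) ≤ Y.card := by simp [T]
  refine ⟨T.sup id, ?_, fun Y hY => Finset.le_sup (f := id) (hT.2 hY)⟩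
  refine Finset.sup_induction (by simp) (fun Y₁ h₁ Y₂ h₂ => ?_) fun Y hY => hT.1 hY
  exact ⟨Finset.union_subset h₁.1 h₂.1, hD.card_le_union h₁.1 h₁.2 h₂.2⟩

lemma IsEvenlyLinked.exists_tight_of_not_insert (hD : IsEvenlyLinked G c U D) (hc : 1 ≤ c) {v : V}
    (hv : v ∉ U ∪ D) (hins : ¬ IsEvenlyLinked G c U (insert v D)) :
    ∃ Y ⊆ D, c * cutrank G Y ((U ∪ D) \ Y) ≤ Y.card ∧
      cutrank G (insert v Y) ((U ∪ D) \ Y) ≤ cutrank G Y ((U ∪ D) \ Y) := by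
  have hvU : v ∉ U := fun h => hv (Finset.mem_union_left D h)
  obtain ⟨Y, hYD, hY⟩ : ∃ Y ⊆ insert v D, c * cutrank G Y ((U ∪ insert v D) \ Y) < Y.card := by
    by_contra! h
    exact hins ⟨Finset.disjoint_insert_right.2 ⟨hvU, hD.disjoint⟩, h⟩
  have hvY : v ∈ Y := by
    by_contra hvY
    have hYD' := (Finset.subset_insert_iff_of_notMem hvY).1 hYD
    have hmono : cutrank G Y ((U ∪ D) \ Y) ≤ cutrank G Y ((U ∪ insert v D) \ Y) :=
      cutrank_mono G le_rfl (by gcongr; simp)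
    have := Nat.mul_le_mul_left c hmono
    have := hD.card_le Y hYD'
    omega
  have hsdiff : (U ∪ insert v D) \ Y = (U ∪ D) \ Y.erase v := by grind
  have hle := hD.card_le (Y.erase v) (Finset.subset_insert_iff.1 hYD)
  have hmono : cutrank G (Y.erase v) ((U ∪ D) \ Y.erase v) ≤ cutrank G Y ((U ∪ D) \ Y.erase v) :=
    cutrank_mono G (Finset.erase_subset v Y) le_rfl
  have := Nat.mul_le_mul_left c hmono
  have := Finset.card_erase_add_one hvY
  rw [hsdiff] at hY
  refine ⟨Y.erase v, Finset.subset_insert_iff.1 hYD, by omega, ?_⟩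
  rw [Finset.insert_erase hvY]
  exact Nat.le_of_mul_le_mul_left (by omega) hc

variable [Fintype V]

lemma exists_isEvenlyLinked (hc : 1 ≤ c)
    (hU : ∀ X, U ⊆ X → c * cutrankFun G U ≤ c * cutrankFun G X + (X \ U).card) :
    ∃ D, IsEvenlyLinked G c U D ∧ c * cutrankFun G U ≤ D.card := by
  obtain ⟨D, hD⟩ := (Set.toFinite {D | IsEvenlyLinked G c U D}).exists_maximal
    ⟨∅, by simp, by simp +contextual⟩
  obtain ⟨hD, hDmax⟩ := hD
  refine ⟨D, hD, ?_⟩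
  obtain ⟨Y, ⟨hYD, hYtight⟩, hYmax⟩ := hD.exists_isGreatest_tight
  have hins : ∀ v ∈ (U ∪ D)ᶜ, cutrank G (insert v Y) ((U ∪ D) \ Y) ≤
      cutrank G Y ((U ∪ D) \ Y) := by
    intro v hv
    rw [Finset.mem_compl] at hv
    obtain ⟨Y₀, hY₀D, hY₀tight, hY₀⟩ := hD.exists_tight_of_not_insert hc hv fun h =>
      hv <| Finset.mem_union_right U <|
        hDmax h (Finset.subset_insert v D) (Finset.mem_insert_self v D)
    have hY₀Y : Y₀ ⊆ Y := hYmax ⟨hY₀D, hY₀tight⟩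
    exact cutrank_insert_le_of_subset hY₀Y (Finset.sdiff_subset_sdiff le_rfl hY₀Y) hY₀
  have hcompl : Y ∪ (U ∪ D)ᶜ = ((U ∪ D) \ Y)ᶜ := by grind [Finset.mem_compl]
  have hle : cutrankFun G ((U ∪ D) \ Y) ≤ cutrank G Y ((U ∪ D) \ Y) := by
    rw [cutrankFun, cutrank_comm, ← hcompl]
    exact cutrank_union_le_of_forall_insert_le hins
  have hdisj := hD.disjoint
  have hsdiff : ((U ∪ D) \ Y) \ U = D \ Y := by grind [Finset.disjoint_left]
  have := hU ((U ∪ D) \ Y) (by grind [Finset.disjoint_left])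
  have := Nat.mul_le_mul_left c hle
  have := Finset.card_sdiff_add_card_eq_card hYD
  rw [hsdiff] at *
  omega

lemma IsEvenlyLinked.cutrankFun_le_cutrank (hD : IsEvenlyLinked G c U D) (hc : 1 ≤ c)
    (hcard : c * cutrankFun G U ≤ D.card) : cutrankFun G U ≤ cutrank G U D := by
  have hle := hcard.trans (hD.card_le D le_rfl)
  rw [Finset.union_sdiff_cancel_right hD.disjoint, cutrank_comm] at hle
  exact Nat.le_of_mul_le_mul_left hle hc

lemma cutrankFun_le_cutrank_of_subset (hdisj : Disjoint U D)
    (hUD : cutrankFun G U ≤ cutrank G U D) {A : Finset V} (hA : A ⊆ U) :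
    cutrankFun G A ≤ cutrank G A ((U ∪ D) \ A) := by
  have hsub := cutrank_inter_union_add_cutrank_union_inter_le G A U ((U ∪ D) \ A) Uᶜ
  have hunion : (U ∪ D) \ A ∪ Uᶜ = Aᶜ := by grind [Finset.mem_compl]
  have hinter : (U ∪ D) \ A ∩ Uᶜ = D := by grind [Finset.mem_compl, Finset.disjoint_left]
  rw [Finset.inter_eq_left.2 hA, Finset.union_eq_right.2 hA, hunion, hinter] at hsub
  rw [cutrankFun] at *
  omega

lemma cutrankFun_inter_add_cutrank_inter_le (hdisj : Disjoint U D)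
    (hUD : cutrankFun G U ≤ cutrank G U D) {X Y : Finset V} (hXY : Disjoint X Y)
    (hunion : X ∪ Y = U ∪ D) :
    cutrankFun G (X ∩ U) + cutrank G (Y ∩ D) ((U ∪ D) \ (Y ∩ D)) ≤
      cutrank G X Y + cutrankFun G U := by
  have hsub := cutrank_inter_union_add_cutrank_union_inter_le G X U Y D
  have hYD : Y ∪ D = (U ∪ D) \ (X ∩ U) := by grind [Finset.disjoint_left]
  have hXU : X ∪ U = (U ∪ D) \ (Y ∩ D) := by grind [Finset.disjoint_left]
  rw [hYD, hXU, cutrank_comm G (_ \ (Y ∩ D))] at hsub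
  have := cutrankFun_le_cutrank_of_subset hdisj hUD (Finset.inter_subset_right (s₁ := X))
  have : cutrank G U D ≤ cutrankFun G U :=
    cutrank_mono G le_rfl (Finset.subset_compl_iff_disjoint_left.2 hdisj)
  omega

lemma IsEvenlyLinked.mul_cutrankFun_inter_add_card_inter_le (hD : IsEvenlyLinked G c U D)
    (hc : 1 ≤ c) (hcard : c * cutrankFun G U ≤ D.card) {X Y : Finset V} (hXY : Disjoint X Y)
    (hunion : X ∪ Y = U ∪ D) :
    c * cutrankFun G (X ∩ U) + (Y ∩ D).card ≤ c * cutrank G X Y + c * cutrankFun G U := by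
  have := Nat.mul_le_mul_left c <| cutrankFun_inter_add_cutrank_inter_le hD.disjoint
    (hD.cutrankFun_le_cutrank hc hcard) hXY hunion
  have := hD.card_le (Y ∩ D) Finset.inter_subset_right
  rw [mul_add, mul_add] at *
  omega

end EvenlyLinked

section BalancedPartition

variable {V : Type*} {G : SimpleGraph V} {S X Y : Finset V}

lemma IsBalancedPartitionOf.symm (h : IsBalancedPartitionOf S X Y) : IsBalancedPartitionOf S Y X :=
  ⟨Finset.union_comm Y X ▸ h.1, h.2.1.symm, h.2.2.2, h.2.2.1⟩

lemma IsBalancedPartitionOf.card_add_card (h : IsBalancedPartitionOf S X Y) :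
    X.card + Y.card = S.card := by
  rw [← h.1, Finset.card_union_of_disjoint h.2.1]

lemma exists_isBalancedPartitionOf_cutrank_eq (G : SimpleGraph V) (hS : 2 ≤ S.card) :
    ∃ X Y, IsBalancedPartitionOf S X Y ∧ cutrank G X Y = minBalCutrank G S := by
  obtain ⟨X, hXS, hX⟩ := Finset.exists_subset_card_eq (Nat.div_le_self S.card 2)
  have := Finset.card_sdiff_add_card_eq_card hXS
  have hXY : IsBalancedPartitionOf S X (S \ X) :=
    ⟨Finset.union_sdiff_of_subset hXS, Finset.disjoint_sdiff, by omega, by omega⟩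
  exact Nat.sInf_mem (s := {k | ∃ X Y, IsBalancedPartitionOf S X Y ∧ cutrank G X Y = k})
    ⟨_, X, S \ X, hXY, rfl⟩

lemma exists_isBalancedPartitionOf_card_le_two_mul (G : SimpleGraph V) (hS : 2 ≤ S.card)
    {A : Finset V} (hA : A ⊆ S) :
    ∃ X Y, IsBalancedPartitionOf S X Y ∧ cutrank G X Y = minBalCutrank G S ∧
      A.card ≤ 2 * (A ∩ X).card := by
  obtain ⟨X, Y, hXY, hcut⟩ := exists_isBalancedPartitionOf_cutrank_eq G hS
  have hsplit : (A ∩ X).card + (A ∩ Y).card = A.card := by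
    rw [← Finset.card_union_of_disjoint (hXY.2.1.mono Finset.inter_subset_right
      Finset.inter_subset_right), ← Finset.inter_union_distrib_left, hXY.1,
      Finset.inter_eq_left.2 hA]
  obtain hle | hle := le_total (A ∩ Y).card (A ∩ X).card
  · exact ⟨X, Y, hXY, hcut, by omega⟩
  · exact ⟨Y, X, hXY.symm, cutrank_comm G Y X ▸ hcut, by omega⟩

lemma IsBalancedPartitionOf.minBalCutrank_le (h : IsBalancedPartitionOf S X Y) :
    minBalCutrank G S ≤ cutrank G X Y :=
  Nat.sInf_le ⟨X, Y, h, rfl⟩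

lemma eq_bot_of_forall_minBalCutrank_eq_zero
    (h : ∀ S : Finset V, 2 ≤ S.card → minBalCutrank G S = 0) : G = ⊥ := by
  refine SimpleGraph.eq_bot_iff_forall_not_adj.2 fun u v huv => ?_
  have hcard : ({u, v} : Finset V).card = 2 := Finset.card_pair huv.ne
  obtain ⟨X, Y, hXY, hcut, hX⟩ := exists_isBalancedPartitionOf_card_le_two_mul G hcard.ge
    (A := {u}) (by simp)
  have huX : u ∈ X := by
    by_contra huX
    simp [huX] at hX
  have hvY : v ∈ Y := by
    have hv : v ∈ X ∪ Y := hXY.1 ▸ by simp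
    refine (Finset.mem_union.1 hv).resolve_left fun hvX => huv.ne ?_
    have := hXY.2.2.1
    exact Finset.card_le_one.1 (by omega) u huX v hvX
  exact cutrank_eq_zero_iff.1 (hcut.trans (h _ hcard.ge)) u huX v hvY huv

end BalancedPartition

section WellLinked

variable {V : Type*} [Fintype V] (G : SimpleGraph V)

/-- `B` is well-linked in `G` if no vertex set of cutrank less than `r` has `r` vertices of `B` both
inside and outside. -/
def IsWellLinked (B : Finset V) : Prop :=
  ∀ Z, (B ∩ Z).card ≤ cutrankFun G Z ∨ (B \ Z).card ≤ cutrankFun G Z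

/-- `X` is heavy with respect to `B` if it contains more vertices of `B` than its cutrank. For
well-linked `B` this orients each separation of small cutrank towards the side with most of `B`. -/
def IsHeavy (B X : Finset V) : Prop :=
  cutrankFun G X < (B ∩ X).card

variable {G} {B U : Finset V}

lemma IsWellLinked.card_sdiff_le (hB : IsWellLinked G B) {X : Finset V} (hX : IsHeavy G B X) :
    (B \ X).card ≤ cutrankFun G X :=
  (hB X).resolve_left (not_le.2 hX)

lemma IsHeavy.of_subset (hU : IsHeavy G B U) {X : Finset V} (hUX : U ⊆ X)
    (hρ : cutrankFun G X ≤ cutrankFun G U) : IsHeavy G B X :=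
  hρ.trans_lt (hU.trans_le (Finset.card_le_card (Finset.inter_subset_inter_left hUX)))

lemma isHeavy_univ (hB : B.Nonempty) : IsHeavy G B Finset.univ := by
  simpa [IsHeavy, cutrankFun] using hB

variable {c M : ℕ}

lemma exists_isEvenlyLinked_of_isHeavy_of_forall_le (hU : IsHeavy G B U)
    (hmin : ∀ X, IsHeavy G B X → U.card + c * cutrankFun G U ≤ X.card + c * cutrankFun G X)
    (hc : 1 ≤ c) : ∃ D, IsEvenlyLinked G c U D ∧ c * cutrankFun G U ≤ D.card := by
  refine exists_isEvenlyLinked hc fun X hUX => ?_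
  obtain hρ | hρ := le_total (cutrankFun G U) (cutrankFun G X)
  · exact (Nat.mul_le_mul_left c hρ).trans (Nat.le_add_right _ _)
  · have := hmin X (hU.of_subset hUX hρ)
    have := Finset.card_sdiff_add_card_eq_card hUX
    omega

lemma card_add_mul_cutrankFun_le_of_isBalancedPartitionOf {D X Y : Finset V}
    (hmin : ∀ X, IsHeavy G B X → U.card + c * cutrankFun G U ≤ X.card + c * cutrankFun G X)
    (hc : 1 ≤ c) (hD : IsEvenlyLinked G c U D) (hcard : c * cutrankFun G U ≤ D.card)
    (hXY : IsBalancedPartitionOf (U ∪ D) X Y) (hcut : cutrank G X Y ≤ M)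
    (hX : IsHeavy G B (X ∩ U)) : U.card + c * cutrankFun G U ≤ 3 * (c * M) := by
  have hexchange := hD.mul_cutrankFun_inter_add_card_inter_le hc hcard hXY.2.1 hXY.1
  have hcutM := Nat.mul_le_mul_left c hcut
  have hU : (X ∩ U).card + (Y ∩ U).card = U.card := by
    rw [← Finset.card_union_of_disjoint (hXY.2.1.mono Finset.inter_subset_left
      Finset.inter_subset_left), ← Finset.union_inter_distrib_right, hXY.1,
      Finset.inter_eq_right.2 Finset.subset_union_left]
  have hY : (Y ∩ U).card + (Y ∩ D).card = Y.card := by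
    rw [← Finset.card_union_of_disjoint (hD.disjoint.mono Finset.inter_subset_right
      Finset.inter_subset_right), ← Finset.inter_union_distrib_left, ← hXY.1,
      Finset.inter_eq_left.2 Finset.subset_union_right]
  have hYM : Y.card ≤ c * M := by
    have := hmin _ hX
    omega
  have := hXY.card_add_card
  have := hXY.2.2.1
  have := Finset.card_union_of_disjoint hD.disjoint
  omega

lemma isHeavy_inter_of_isEvenlyLinked {D X Y : Finset V} (hc : 1 ≤ c)
    (hD : IsEvenlyLinked G c U D) (hcard : c * cutrankFun G U ≤ D.card)
    (hXY : IsBalancedPartitionOf (U ∪ D) X Y) (hcut : cutrank G X Y ≤ M)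
    (hlt : M + cutrankFun G U < (B ∩ (X ∩ U)).card) : IsHeavy G B (X ∩ U) := by
  have hexchange := hD.mul_cutrankFun_inter_add_card_inter_le hc hcard hXY.2.1 hXY.1
  have hcutM := Nat.mul_le_mul_left c hcut
  have : cutrankFun G (X ∩ U) ≤ M + cutrankFun G U :=
    Nat.le_of_mul_le_mul_left (by rw [mul_add]; omega) hc
  exact this.trans_lt hlt

lemma IsWellLinked.exists_isHeavy_of_succ (hB : IsWellLinked G B)
    (hM : ∀ S : Finset V, 2 ≤ S.card → minBalCutrank G S ≤ M) (hBM : 14 * M ≤ B.card) (hc : 4 ≤ c)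
    (h : ∃ U, IsHeavy G B U ∧ U.card + (c + 1) * cutrankFun G U ≤ 3 * ((c + 1) * M)) :
    ∃ U, IsHeavy G B U ∧ U.card + c * cutrankFun G U ≤ 3 * (c * M) := by
  obtain ⟨U₀, hU₀, hle₀⟩ := h
  obtain ⟨U, hU, hmin⟩ := Finset.exists_min_image (Finset.univ.filter (IsHeavy G B))
    (fun U => U.card + c * cutrankFun G U) ⟨U₀, by simpa using hU₀⟩
  simp only [Finset.mem_filter, Finset.mem_univ, true_and] at hU hmin
  refine ⟨U, hU, ?_⟩
  have hU_card := hU.trans_le (Finset.card_le_card Finset.inter_subset_right)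
  have hle : U.card + c * cutrankFun G U ≤ 3 * (c * M) + 3 * M := by linarith [hmin U₀ hU₀]
  have hM1 : 1 ≤ M := by
    by_contra! hM0
    simp only [Nat.lt_one_iff.1 hM0, mul_zero] at hle
    omega
  have hρ : 4 * cutrankFun G U ≤ 15 * M :=
    have : c * (4 * cutrankFun G U) ≤ c * (15 * M) := by linarith [Nat.mul_le_mul_right M hc]
    Nat.le_of_mul_le_mul_left this (by omega)
  have hBU := hB.card_sdiff_le hU
  have := Finset.card_inter_add_card_sdiff B U
  have hc1 : 1 ≤ c := by omega
  obtain ⟨D, hD, hcard⟩ := exists_isEvenlyLinked_of_isHeavy_of_forall_le hU hmin hc1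
  have hUD : 2 ≤ (U ∪ D).card := by
    have := Finset.card_le_card (Finset.inter_subset_right.trans Finset.subset_union_left :
      B ∩ U ⊆ U ∪ D)
    omega
  obtain ⟨X, Y, hXY, hcut, hmajority⟩ := exists_isBalancedPartitionOf_card_le_two_mul G hUD
    (Finset.inter_subset_right.trans Finset.subset_union_left : B ∩ U ⊆ U ∪ D)
  rw [Finset.inter_assoc, Finset.inter_comm U] at hmajority
  have hcutM : cutrank G X Y ≤ M := hcut.trans_le (hM _ hUD)
  exact card_add_mul_cutrankFun_le_of_isBalancedPartitionOf hmin hc1 hD hcard hXY hcutM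
    (isHeavy_inter_of_isEvenlyLinked hc1 hD hcard hXY hcutM (by omega))

lemma IsWellLinked.card_lt (hB : IsWellLinked G B)
    (hM : ∀ S : Finset V, 2 ≤ S.card → minBalCutrank G S ≤ M) (hM1 : 1 ≤ M) : B.card < 14 * M := by
  by_contra! hBM
  have hdesc (n : ℕ) :
      (∃ U, IsHeavy G B U ∧ U.card + (4 + n) * cutrankFun G U ≤ 3 * ((4 + n) * M)) →
      ∃ U, IsHeavy G B U ∧ U.card + 4 * cutrankFun G U ≤ 3 * (4 * M) := by
    induction n with
    | zero => exact id
    | succ n ih => exact fun h => ih (hB.exists_isHeavy_of_succ hM hBM (Nat.le_add_right 4 n) h)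
  obtain ⟨U, hU, hle⟩ := hdesc (Fintype.card V) ⟨Finset.univ,
    isHeavy_univ (Finset.card_pos.1 (by omega)), by
      have := Nat.le_mul_of_pos_right (4 + Fintype.card V) hM1
      rw [cutrankFun, Finset.compl_univ, cutrank_empty_right, Finset.card_univ]
      omega⟩
  have := hB.card_sdiff_le hU
  have := Finset.card_inter_add_card_sdiff B U
  have := Finset.card_le_card (Finset.inter_subset_right (s₁ := B) (s₂ := U))
  omega

end WellLinked

section Split

/-- `X` is the disjoint union of the nonempty sets `X₁` and `X₂`: one branching step in the
recursive construction of a rank-decomposition. -/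
structure IsSplit {V : Type*} (X X₁ X₂ : Finset V) : Prop where
  nonempty_left : X₁.Nonempty
  nonempty_right : X₂.Nonempty
  disjoint : Disjoint X₁ X₂
  union_eq : X₁ ∪ X₂ = X

lemma IsSplit.ssubset_left {V : Type*} {X X₁ X₂ : Finset V} (h : IsSplit X X₁ X₂) : X₁ ⊂ X := by
  obtain ⟨-, ⟨x, hx⟩, hdisj, rfl⟩ := h
  exact (Finset.ssubset_iff_of_subset Finset.subset_union_left).2
    ⟨x, Finset.mem_union_right _ hx, Finset.disjoint_right.1 hdisj hx⟩

lemma IsSplit.symm {V : Type*} {X X₁ X₂ : Finset V} (h : IsSplit X X₁ X₂) : IsSplit X X₂ X₁ :=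
  ⟨h.nonempty_right, h.nonempty_left, h.disjoint.symm, by rw [Finset.union_comm, h.union_eq]⟩

lemma isSplit_erase {V : Type*} {X : Finset V} {v : V} (hv : v ∈ X) (hX : 2 ≤ X.card) :
    IsSplit X {v} (X.erase v) where
  nonempty_left := Finset.singleton_nonempty v
  nonempty_right := Finset.card_pos.1 (by rw [Finset.card_erase_of_mem hv]; omega)
  disjoint := by simp
  union_eq := by rw [← Finset.insert_eq, Finset.insert_erase hv]

variable {V : Type*} [Fintype V] {G : SimpleGraph V}

lemma cutrankFun_singleton_le_one (v : V) : cutrankFun G {v} ≤ 1 :=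
  cutrank_le_card_left G {v} {v}ᶜ

lemma cutrankFun_erase_le (X : Finset V) (v : V) :
    cutrankFun G (X.erase v) ≤ cutrankFun G X + 1 := by
  have := cutrankFun_inter_add_cutrankFun_union_le G X {v}ᶜ
  have := cutrankFun_singleton_le_one (G := G) v
  rw [cutrankFun_compl] at *
  rw [← Finset.sdiff_singleton_eq_erase, Finset.sdiff_eq_inter_compl]
  omega

variable {B X Z : Finset V}

lemma inter_nonempty_of_cutrankFun_lt (hB : cutrank G B X = B.card)
    (hZ : cutrankFun G Z < (B ∩ Z).card) : (X ∩ Z).Nonempty := by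
  by_contra! hXZ
  have hdisj : Disjoint X Z := Finset.disjoint_iff_inter_eq_empty.2 hXZ
  have := cutrank_eq_card_of_subset hB (Finset.inter_subset_left (s₂ := Z))
  have : cutrank G (B ∩ Z) X ≤ cutrankFun G Z :=
    cutrank_mono G Finset.inter_subset_right (Finset.subset_compl_iff_disjoint_right.2 hdisj)
  omega

lemma cutrankFun_inter_lt (hBX : B ⊆ Xᶜ) (hB : cutrank G B X = B.card)
    (hZ : cutrankFun G Z < (B \ Z).card) : cutrankFun G (X ∩ Z) < cutrankFun G X := by
  have := cutrankFun_inter_add_cutrankFun_union_le G X Z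
  have := cutrank_eq_card_of_subset hB (Finset.sdiff_subset (t := Z))
  have : cutrank G (B \ Z) X ≤ cutrankFun G (X ∪ Z) := by
    rw [cutrank_comm]
    exact cutrank_mono G Finset.subset_union_left <| by
      rw [Finset.compl_union, ← Finset.sdiff_eq_inter_compl]
      exact Finset.sdiff_subset_sdiff hBX le_rfl
  omega

lemma exists_isSplit_cutrankFun_le_of_isWellLinked {k : ℕ} (hk : ∀ B, IsWellLinked G B → B.card < k)
    (hX : 2 ≤ X.card) (hρ : cutrankFun G X ≤ k) :
    ∃ X₁ X₂, IsSplit X X₁ X₂ ∧ cutrankFun G X₁ ≤ k ∧ cutrankFun G X₂ ≤ k := by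
  obtain hlt | rfl := hρ.lt_or_eq
  · obtain ⟨v, hv⟩ := Finset.card_pos.1 (zero_lt_two.trans_le hX)
    have := cutrankFun_singleton_le_one (G := G) v
    have := cutrankFun_erase_le (G := G) X v
    exact ⟨{v}, X.erase v, isSplit_erase hv hX, by omega, by omega⟩
  · obtain ⟨B, hBX, hB, hcard⟩ := exists_subset_cutrank_eq_card G Xᶜ X
    rw [cutrank_comm G Xᶜ] at hcard
    obtain ⟨Z, hZ, hZ'⟩ : ∃ Z, cutrankFun G Z < (B ∩ Z).card ∧ cutrankFun G Z < (B \ Z).card := by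
      by_contra! h
      exact (hk B fun Z => or_iff_not_imp_left.2 fun hZ => h Z (not_le.1 hZ)).ne hcard
    have hcompl : cutrankFun G Zᶜ < (B ∩ Zᶜ).card := by
      rwa [cutrankFun_compl, ← Finset.sdiff_eq_inter_compl]
    have hcompl' : cutrankFun G Zᶜ < (B \ Zᶜ).card := by
      rwa [cutrankFun_compl, Finset.sdiff_eq_inter_compl, compl_compl]
    exact ⟨X ∩ Z, X ∩ Zᶜ, ⟨inter_nonempty_of_cutrankFun_lt hB hZ,
      inter_nonempty_of_cutrankFun_lt hB hcompl,
      disjoint_compl_right.mono Finset.inter_subset_right Finset.inter_subset_right,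
      by rw [← Finset.inter_union_distrib_left, Finset.union_compl, Finset.inter_univ]⟩,
      (cutrankFun_inter_lt hBX hB hZ').le, (cutrankFun_inter_lt hBX hB hcompl').le⟩

lemma exists_isSplit_cutrankFun_le {M : ℕ}
    (hM : ∀ S : Finset V, 2 ≤ S.card → minBalCutrank G S ≤ M) (hX : 2 ≤ X.card)
    (hρ : cutrankFun G X ≤ 14 * M) :
    ∃ X₁ X₂, IsSplit X X₁ X₂ ∧ cutrankFun G X₁ ≤ 14 * M ∧ cutrankFun G X₂ ≤ 14 * M := by
  obtain rfl | hM0 := M.eq_zero_or_pos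
  · obtain ⟨v, hv⟩ := Finset.card_pos.1 (zero_lt_two.trans_le hX)
    obtain rfl := eq_bot_of_forall_minBalCutrank_eq_zero fun S hS => Nat.le_zero.1 (hM S hS)
    exact ⟨{v}, X.erase v, isSplit_erase hv hX, by simp [cutrankFun], by simp [cutrankFun]⟩
  · exact exists_isSplit_cutrankFun_le_of_isWellLinked (fun B hB => hB.card_lt hM hM0) hX hρ

end Split

section TreeEdge

variable {W : Type*} {T : SimpleGraph W} {u v a b : W}

lemma iff_of_reachable_deleteEdges {P : W → Prop}
    (hP : ∀ ⦃a b⦄, T.Adj a b → s(a, b) ≠ s(u, v) → (P a ↔ P b))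
    (hab : (T.deleteEdges {s(u, v)}).Reachable a b) : P a ↔ P b := by
  obtain ⟨p⟩ := hab
  induction p with
  | nil => rfl
  | cons hadj _ ih => exact (hP (T.deleteEdges_adj.1 hadj).1 (T.deleteEdges_adj.1 hadj).2).trans ih

lemma reachable_deleteEdges_left_or_right (hT : T.Preconnected) (u v a : W) :
    (T.deleteEdges {s(u, v)}).Reachable a u ∨ (T.deleteEdges {s(u, v)}).Reachable a v := by
  induction (SimpleGraph.reachable_iff_reflTransGen a u).1 (hT a u)
    using Relation.ReflTransGen.head_induction_on with
  | refl => exact .inl .rfl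
  | @head a b hadj _ ih =>
    by_cases hab : s(a, b) = s(u, v)
    · obtain ⟨rfl, -⟩ | ⟨rfl, -⟩ := Sym2.eq_iff.1 hab
      exacts [.inl .rfl, .inr .rfl]
    · have : (T.deleteEdges {s(u, v)}).Reachable a b :=
        (T.deleteEdges_adj.2 ⟨hadj, hab⟩).reachable
      exact ih.imp this.trans this.trans

lemma reachable_deleteEdges_right_iff (hT : T.IsTree) (huv : T.Adj u v) (a : W) :
    (T.deleteEdges {s(u, v)}).Reachable a v ↔ ¬ (T.deleteEdges {s(u, v)}).Reachable a u :=
  ⟨fun hv hu => SimpleGraph.isAcyclic_iff_forall_adj_isBridge.1 hT.isAcyclic huv (hu.symm.trans hv),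
    (reachable_deleteEdges_left_or_right hT.preconnected u v a).resolve_left⟩

end TreeEdge

namespace RankDecomp

variable {V : Type*} [Fintype V] {G : SimpleGraph V} {d : RankDecomp V} {u v : Fin d.n}

lemma mem_side {x : V} :
    x ∈ d.side u v ↔ (d.tree.deleteEdges {s(u, v)}).Reachable (d.leaf x) u := by
  simp only [side, Finset.mem_filter_univ]

lemma side_swap (huv : d.tree.Adj u v) : d.side v u = (d.side u v)ᶜ := by
  ext x
  rw [Finset.mem_compl, mem_side, mem_side, Sym2.eq_swap,
    reachable_deleteEdges_right_iff d.isTree huv]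

lemma widthLE_iff_forall_cutrankFun_le {k : ℕ} :
    d.widthLE G k ↔ ∀ u v, d.tree.Adj u v → cutrankFun G (d.side u v) ≤ k :=
  forall₃_congr fun _ _ huv => by rw [side_swap huv, cutrankFun]

lemma side_eq_filter {P : Fin d.n → Prop} (huv : d.tree.Adj u v)
    (hP : ∀ ⦃a b⦄, d.tree.Adj a b → s(a, b) ≠ s(u, v) → (P a ↔ P b)) (hu : P u) (hv : ¬ P v) :
    d.side u v = Finset.univ.filter fun x => P (d.leaf x) := by
  ext x
  rw [mem_side, Finset.mem_filter_univ]
  refine ⟨fun h => (iff_of_reachable_deleteEdges hP h).2 hu, fun h => ?_⟩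
  contrapose! hv
  rw [← reachable_deleteEdges_right_iff d.isTree huv] at hv
  exact (iff_of_reachable_deleteEdges hP hv).1 h

lemma exists_of_isTree {W : Type*} [Fintype W] {T : SimpleGraph W} (hT : T.IsTree)
    (hdeg : ∀ t, T.degree t ≤ 3) {leaf : V → W} (hleaf : Function.Injective leaf)
    (hdeg_leaf : ∀ t, T.degree t = 1 ↔ t ∈ Set.range leaf) :
    ∃ (d : RankDecomp V) (φ : T ≃g d.tree), ∀ v, d.leaf v = φ (leaf v) := by
  let φ := T.overFinIso rfl
  have hφ (t) : (T.overFin rfl).degree t = T.degree (φ.symm t) := (φ.symm.degree_eq t).symm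
  exact ⟨{
    n := Fintype.card W
    tree := T.overFin rfl
    isTree := φ.isTree_iff.1 hT
    subcubic := fun t => by convert (hφ t).trans_le (hdeg _)
    leaf := fun v => φ (leaf v)
    leafDeg := fun v => by
      convert (φ.degree_eq _).trans ((hdeg_leaf (leaf v)).2 ⟨v, rfl⟩)
    leafInj := φ.injective.comp hleaf
    leafSurj := fun t ht => by
      obtain ⟨v, hv⟩ := (hdeg_leaf (φ.symm t)).1 <| (hφ t).symm.trans (by convert ht)
      exact ⟨v, by rw [hv, RelIso.apply_symm_apply]⟩ }, φ, fun _ => rfl⟩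

end RankDecomp

section HasseTree

variable {α : Type*} [PartialOrder α] {a b c d : α}

lemma eq_of_covBy_of_covBy (hchain : ∀ a b c : α, a ≤ b → a ≤ c → b ≤ c ∨ c ≤ b)
    (hab : a ⋖ b) (hac : a ⋖ c) : b = c := by
  obtain h | h := hchain a b c hab.le hac.le
  · exact (hac.eq_or_eq hab.le h).resolve_left hab.ne'
  · exact ((hab.eq_or_eq hac.le h).resolve_left hac.ne').symm

lemma eq_and_eq_of_hasse_adj_of_le_of_not_le (hchain : ∀ a b c : α, a ≤ b → a ≤ c → b ≤ c ∨ c ≤ b)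
    (hab : a ⋖ b) (hcd : (SimpleGraph.hasse α).Adj c d) (hc : c ≤ a) (hd : ¬ d ≤ a) :
    c = a ∧ d = b := by
  obtain hcd | hdc := SimpleGraph.hasse_adj.1 hcd
  · obtain hca | rfl := hc.lt_or_eq
    · obtain h | h := hchain c a d hca.le hcd.le
      · exact absurd ((hcd.eq_or_eq hca.le h).resolve_left hca.ne').ge hd
      · exact absurd h hd
    · exact ⟨rfl, eq_of_covBy_of_covBy hchain hcd hab⟩
  · exact absurd (hdc.le.trans hc) hd

lemma le_iff_le_of_hasse_adj (hchain : ∀ a b c : α, a ≤ b → a ≤ c → b ≤ c ∨ c ≤ b)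
    (hab : a ⋖ b) (hcd : (SimpleGraph.hasse α).Adj c d) (hne : s(c, d) ≠ s(a, b)) :
    c ≤ a ↔ d ≤ a := by
  constructor <;> refine fun h => of_not_not fun h' => hne (Sym2.eq_iff.2 ?_)
  · exact .inl (eq_and_eq_of_hasse_adj_of_le_of_not_le hchain hab hcd h h')
  · exact .inr (eq_and_eq_of_hasse_adj_of_le_of_not_le hchain hab hcd.symm h h').symm

lemma isTree_hasse [Finite α] {t : α} (ht : IsTop t)
    (hchain : ∀ a b c : α, a ≤ b → a ≤ c → b ≤ c ∨ c ≤ b) : (SimpleGraph.hasse α).IsTree where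
  connected := (SimpleGraph.connected_iff_exists_forall_reachable _).2 ⟨t, fun a => by
    refine SimpleGraph.Reachable.symm ?_
    induction a using WellFoundedGT.induction with | _ a ih
    obtain rfl | ha := eq_or_ne a t
    · rfl
    · obtain ⟨b, hab, -⟩ := exists_covBy_le_of_lt ((ht a).lt_of_ne ha)
      exact (SimpleGraph.Adj.reachable (SimpleGraph.hasse_adj.2 (.inl hab))).trans (ih b hab.lt)⟩
  isAcyclic := by
    have hbridge {a b : α} (hab : a ⋖ b) : (SimpleGraph.hasse α).IsBridge s(a, b) := fun h =>
      hab.lt.not_ge <|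
        (iff_of_reachable_deleteEdges (fun _ _ => le_iff_le_of_hasse_adj hchain hab) h).1 le_rfl
    refine SimpleGraph.isAcyclic_iff_forall_adj_isBridge.2 fun a b hab => ?_
    obtain hab | hba := SimpleGraph.hasse_adj.1 hab
    exacts [hbridge hab, Sym2.eq_swap ▸ hbridge hba]

variable [Fintype α]

lemma degree_hasse (a : α) : (SimpleGraph.hasse α).degree a =
    (Finset.univ.filter (a ⋖ ·)).card + (Finset.univ.filter (· ⋖ a)).card := by
  rw [← SimpleGraph.card_neighborFinset_eq_degree, ← Finset.card_union_of_disjoint]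
  · congr 1
    ext b
    simp only [SimpleGraph.mem_neighborFinset, SimpleGraph.hasse_adj, Finset.mem_union,
      Finset.mem_filter_univ]
  · exact Finset.disjoint_filter.2 fun b _ hab hba => hab.lt.asymm hba.lt

lemma card_covBy_le_one (hchain : ∀ a b c : α, a ≤ b → a ≤ c → b ≤ c ∨ c ≤ b) (a : α) :
    (Finset.univ.filter (a ⋖ ·)).card ≤ 1 :=
  Finset.card_le_one.2 fun _ hb _ hc =>
    eq_of_covBy_of_covBy hchain ((Finset.mem_filter_univ _).1 hb) ((Finset.mem_filter_univ _).1 hc)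

lemma card_covBy_pos (hab : a < b) : 0 < (Finset.univ.filter (a ⋖ ·)).card := by
  obtain ⟨c, hac, -⟩ := exists_covBy_le_of_lt hab
  exact Finset.card_pos.2 ⟨c, (Finset.mem_filter_univ c).2 hac⟩

end HasseTree

section Laminar

/-- `F` is a laminar family of nonempty subsets of `X`, containing `X` and its singletons, each of
whose non-singleton members is split into two further members. Its members are the nodes of a binary
tree whose leaves are the elements of `X`. -/
structure IsBinaryLaminar {V : Type*} (F : Finset (Finset V)) (X : Finset V) : Prop where
  top_mem : X ∈ F
  subset ⦃A⦄ : A ∈ F → A ⊆ X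
  nonempty ⦃A⦄ : A ∈ F → A.Nonempty
  laminar ⦃A B⦄ : A ∈ F → B ∈ F → A ⊆ B ∨ B ⊆ A ∨ Disjoint A B
  singleton_mem ⦃x⦄ : x ∈ X → {x} ∈ F
  split ⦃A⦄ : A ∈ F → 2 ≤ A.card → ∃ A₁ ∈ F, ∃ A₂ ∈ F, IsSplit A A₁ A₂

variable {V : Type*}

lemma isBinaryLaminar_singleton (x : V) : IsBinaryLaminar {{x}} {x} where
  top_mem := Finset.mem_singleton_self _
  subset _ hA := (Finset.mem_singleton.1 hA).subset
  nonempty _ hA := Finset.mem_singleton.1 hA ▸ Finset.singleton_nonempty x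
  laminar _ _ hA hB := .inl <| by rw [Finset.mem_singleton.1 hA, Finset.mem_singleton.1 hB]
  singleton_mem y hy := by rw [Finset.mem_singleton.1 hy, Finset.mem_singleton]
  split A hA hcard := by rw [Finset.mem_singleton.1 hA, Finset.card_singleton] at hcard; omega

lemma IsSplit.isBinaryLaminar {F₁ F₂ : Finset (Finset V)} {X X₁ X₂ : Finset V}
    (h : IsSplit X X₁ X₂) (h₁ : IsBinaryLaminar F₁ X₁) (h₂ : IsBinaryLaminar F₂ X₂) :
    IsBinaryLaminar (insert X (F₁ ∪ F₂)) X := by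
  have hdisj := h.disjoint
  obtain rfl := h.union_eq
  have hsub : ∀ A ∈ insert (X₁ ∪ X₂) (F₁ ∪ F₂), A ⊆ X₁ ∪ X₂ := by
    simp only [Finset.forall_mem_insert, Finset.mem_union]
    exact ⟨subset_rfl, fun A hA => hA.elim (fun hA => (h₁.subset hA).trans Finset.subset_union_left)
      fun hA => (h₂.subset hA).trans Finset.subset_union_right⟩
  refine ⟨Finset.mem_insert_self _ _, hsub, ?_, fun A B hA hB => ?_, fun x hx => ?_, ?_⟩
  · simp only [Finset.mem_insert, Finset.mem_union]
    rintro A (rfl | hA | hA)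
    exacts [h.nonempty_left.inl, h₁.nonempty hA, h₂.nonempty hA]
  · obtain rfl | hA' := Finset.mem_insert.1 hA
    · exact .inr (.inl (hsub B hB))
    obtain rfl | hB' := Finset.mem_insert.1 hB
    · exact .inl (hsub A hA)
    obtain hA | hA := Finset.mem_union.1 hA' <;> obtain hB | hB := Finset.mem_union.1 hB'
    · exact h₁.laminar hA hB
    · exact .inr (.inr (hdisj.mono (h₁.subset hA) (h₂.subset hB)))
    · exact .inr (.inr (hdisj.symm.mono (h₂.subset hA) (h₁.subset hB)))
    · exact h₂.laminar hA hB
  · exact Finset.mem_insert_of_mem <| Finset.mem_union.2 <|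
      (Finset.mem_union.1 hx).imp (h₁.singleton_mem ·) (h₂.singleton_mem ·)
  · simp only [Finset.mem_insert, Finset.mem_union]
    rintro A (rfl | hA | hA) hcard
    · exact ⟨X₁, .inr (.inl h₁.top_mem), X₂, .inr (.inr h₂.top_mem), h⟩
    · obtain ⟨A₁, hA₁, A₂, hA₂, hs⟩ := h₁.split hA hcard
      exact ⟨A₁, .inr (.inl hA₁), A₂, .inr (.inl hA₂), hs⟩
    · obtain ⟨A₁, hA₁, A₂, hA₂, hs⟩ := h₂.split hA hcard
      exact ⟨A₁, .inr (.inr hA₁), A₂, .inr (.inr hA₂), hs⟩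

lemma exists_isBinaryLaminar {P : Finset V → Prop}
    (hP : ∀ X, P X → 2 ≤ X.card → ∃ X₁ X₂, IsSplit X X₁ X₂ ∧ P X₁ ∧ P X₂)
    {X : Finset V} (hX : X.Nonempty) (hPX : P X) :
    ∃ F, IsBinaryLaminar F X ∧ ∀ A ∈ F, P A := by
  induction X using Finset.strongInduction with | _ X ih
  obtain hcard | hcard := lt_or_ge X.card 2
  · obtain ⟨x, rfl⟩ := Finset.card_eq_one.1 (by have := hX.card_pos; omega : X.card = 1)
    exact ⟨{{x}}, isBinaryLaminar_singleton x, by simpa using hPX⟩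
  · obtain ⟨X₁, X₂, hs, hP₁, hP₂⟩ := hP X hPX hcard
    obtain ⟨F₁, hF₁, hPF₁⟩ := ih X₁ hs.ssubset_left hs.nonempty_left hP₁
    obtain ⟨F₂, hF₂, hPF₂⟩ := ih X₂ hs.symm.ssubset_left hs.nonempty_right hP₂
    refine ⟨_, hs.isBinaryLaminar hF₁ hF₂, ?_⟩
    simp only [Finset.forall_mem_insert, Finset.mem_union]
    exact ⟨hPX, fun A hA => hA.elim (hPF₁ A) (hPF₂ A)⟩

namespace IsBinaryLaminar

variable {F : Finset (Finset V)} {X : Finset V}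

lemma subset_or_subset (hF : IsBinaryLaminar F X) {A A₁ A₂ C : Finset V} (hA₁ : A₁ ∈ F)
    (hA₂ : A₂ ∈ F) (hs : IsSplit A A₁ A₂) (hC : C ∈ F) (hCA : C ⊂ A) : C ⊆ A₁ ∨ C ⊆ A₂ := by
  obtain ⟨-, -, -, rfl⟩ := hs
  obtain h₁ | h₁ | h₁ := hF.laminar hC hA₁
  · exact .inl h₁
  · obtain h₂ | h₂ | h₂ := hF.laminar hC hA₂
    · exact .inr h₂
    · exact absurd (Finset.union_subset h₁ h₂) hCA.not_subset
    · exact .inl (h₂.left_le_of_le_sup_right hCA.subset)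
  · exact .inr (h₁.left_le_of_le_sup_left hCA.subset)

lemma le_or_le (hF : IsBinaryLaminar F X) (a b c : F) (hab : a ≤ b) (hac : a ≤ c) :
    b ≤ c ∨ c ≤ b := by
  refine (hF.laminar b.2 c.2).imp_right fun h => h.resolve_right fun hdisj => ?_
  exact (hF.nonempty a.2).ne_empty (disjoint_self.1 (hdisj.mono hab hac))

lemma covBy_left (hF : IsBinaryLaminar F X) {A A₁ A₂ : F} (hs : IsSplit A.1 A₁.1 A₂.1) :
    A₁ ⋖ A := by
  refine ⟨hs.ssubset_left, fun C h₁ h => ?_⟩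
  obtain h' | h' := hF.subset_or_subset A₁.2 A₂.2 hs C.2 h
  · exact h₁.not_ge h'
  · exact hs.nonempty_left.ne_empty (disjoint_self.1 (hs.disjoint.mono_right (h₁.le.trans h')))

lemma covBy_iff (hF : IsBinaryLaminar F X) {A A₁ A₂ C : F} (hs : IsSplit A.1 A₁.1 A₂.1) :
    C ⋖ A ↔ C = A₁ ∨ C = A₂ := by
  refine ⟨fun hC => ?_, ?_⟩
  · refine (hF.subset_or_subset A₁.2 A₂.2 hs C.2 hC.lt).imp (fun h => ?_) fun h => ?_
    · exact ((hC.eq_or_eq h hs.ssubset_left.subset).resolve_right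
        (ne_of_lt (a := A₁) hs.ssubset_left)).symm
    · exact ((hC.eq_or_eq h hs.symm.ssubset_left.subset).resolve_right
        (ne_of_lt (a := A₂) hs.symm.ssubset_left)).symm
  · rintro (rfl | rfl)
    exacts [hF.covBy_left hs, hF.covBy_left hs.symm]

lemma card_covBy_eq_two (hF : IsBinaryLaminar F X) {A : F} (hA : 2 ≤ A.1.card) :
    (Finset.univ.filter (· ⋖ A)).card = 2 := by
  obtain ⟨A₁, hA₁, A₂, hA₂, hs⟩ := hF.split A.2 hA
  have hne : A₁ ≠ A₂ := hs.disjoint.ne hs.nonempty_left.ne_empty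
  refine Finset.card_eq_two.2 ⟨⟨A₁, hA₁⟩, ⟨A₂, hA₂⟩, fun h => hne (congrArg Subtype.val h), ?_⟩
  ext C
  simp only [Finset.mem_filter_univ, Finset.mem_insert, Finset.mem_singleton]
  exact hF.covBy_iff hs

lemma card_covBy_eq_zero (hF : IsBinaryLaminar F X) {A : F} (hA : A.1.card < 2) :
    (Finset.univ.filter (· ⋖ A)).card = 0 := by
  refine Finset.card_eq_zero.2 (Finset.filter_eq_empty_iff.2 fun C _ hC => ?_)
  have := (hF.nonempty C.2).card_pos
  have := Finset.card_lt_card hC.lt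
  omega

lemma degree_hasse_le_three (hF : IsBinaryLaminar F X) (A : F) :
    (SimpleGraph.hasse F).degree A ≤ 3 := by
  have := card_covBy_le_one hF.le_or_le A
  rw [degree_hasse]
  obtain hA | hA := lt_or_ge A.1.card 2
  · rw [hF.card_covBy_eq_zero hA]; omega
  · rw [hF.card_covBy_eq_two hA]; omega

lemma degree_hasse_eq_one_iff (hF : IsBinaryLaminar F X) (hX : 2 ≤ X.card) (A : F) :
    (SimpleGraph.hasse F).degree A = 1 ↔ A.1.card = 1 := by
  have := (hF.nonempty A.2).card_pos
  rw [degree_hasse]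
  obtain hA | hA := lt_or_ge A.1.card 2
  · have hlt : A < ⟨X, hF.top_mem⟩ := (hF.subset A.2).ssubset_of_ne fun h => by
      rw [h] at hA; omega
    have := card_covBy_le_one hF.le_or_le A
    have := card_covBy_pos hlt
    rw [hF.card_covBy_eq_zero hA]
    omega
  · rw [hF.card_covBy_eq_two hA]
    omega

variable [Fintype V]

theorem exists_rankDecomp (hF : IsBinaryLaminar F Finset.univ) (hV : 2 ≤ Fintype.card V) :
    ∃ d : RankDecomp V, ∀ u v, d.tree.Adj u v → d.side u v ∈ F ∨ d.side v u ∈ F := by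
  let leaf (x : V) : F := ⟨{x}, hF.singleton_mem (Finset.mem_univ x)⟩
  obtain ⟨d, φ, hφ⟩ := RankDecomp.exists_of_isTree (leaf := leaf)
    (isTree_hasse (t := ⟨Finset.univ, hF.top_mem⟩) (fun A => hF.subset A.2) hF.le_or_le)
    hF.degree_hasse_le_three (fun x y h => Finset.singleton_injective (congrArg Subtype.val h))
    fun A => by
      rw [hF.degree_hasse_eq_one_iff hV, Finset.card_eq_one]
      exact exists_congr fun x => ⟨fun h => Subtype.ext h.symm, fun h => h ▸ rfl⟩
  have hside {A B : F} (hAB : A ⋖ B) : d.side (φ A) (φ B) = A := by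
    have hadj : d.tree.Adj (φ A) (φ B) := φ.map_adj_iff.2 (.inl hAB)
    rw [RankDecomp.side_eq_filter (P := fun t => φ.symm t ≤ A) hadj]
    · ext x
      simp [hφ, leaf, ← Subtype.coe_le_coe]
    · intro a b hab hne
      refine le_iff_le_of_hasse_adj hF.le_or_le hAB (φ.symm.map_adj_iff.2 hab) fun h => hne ?_
      simpa using congrArg (Sym2.map φ) h
    · simp
    · simpa using hAB.lt.not_ge
  refine ⟨d, fun u v huv => ?_⟩
  obtain ⟨A, rfl⟩ := φ.surjective u
  obtain ⟨B, rfl⟩ := φ.surjective v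
  obtain hAB | hBA := φ.map_adj_iff.1 huv
  · exact .inl (hside hAB ▸ A.2)
  · exact .inr (hside hBA ▸ B.2)

end IsBinaryLaminar

variable [Fintype V] {G : SimpleGraph V}

theorem exists_widthLE_of_forall_isSplit {k : ℕ} (hV : 2 ≤ Fintype.card V)
    (hk : ∀ X, 2 ≤ X.card → cutrankFun G X ≤ k →
      ∃ X₁ X₂, IsSplit X X₁ X₂ ∧ cutrankFun G X₁ ≤ k ∧ cutrankFun G X₂ ≤ k) :
    ∃ d : RankDecomp V, d.widthLE G k := by
  obtain ⟨F, hF, hFk⟩ := exists_isBinaryLaminar (P := (cutrankFun G · ≤ k)) (X := Finset.univ)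
    (fun X hX hcard => hk X hcard hX) (Finset.card_pos.1 (zero_lt_two.trans_le hV))
    (by simp [cutrankFun])
  obtain ⟨d, hd⟩ := hF.exists_rankDecomp hV
  refine ⟨d, RankDecomp.widthLE_iff_forall_cutrankFun_le.2 fun u v huv => ?_⟩
  obtain h | h := hd u v huv
  · exact hFk _ h
  · rw [← cutrankFun_compl, ← RankDecomp.side_swap huv]
    exact hFk _ h

end Laminar

section UpperBound

lemma exists_sink_of_isTree {W : Type*} [Finite W] {T : SimpleGraph W} (hT : T.IsTree)
    {R : W → W → Prop} (hR : ∀ u v, R u v → ¬ R v u) : ∃ u, ∀ v, T.Adj u v → ¬ R u v := by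
  have := Fintype.ofFinite W
  by_contra! h
  choose f hadj hf using h
  have hinj : Set.InjOn (fun u => s(u, f u)) (Finset.univ : Finset W) := fun u _ v _ huv => by
    obtain ⟨huv, -⟩ | ⟨huv, hvu⟩ := Sym2.eq_iff.1 huv
    · exact huv
    · exact absurd (huv ▸ hf v) (hR _ _ (hvu ▸ hf u))
  have hcard := Finset.card_le_card_of_injOn (t := T.edgeFinset) _
    (fun u _ => SimpleGraph.mem_edgeFinset.2 (hadj u)) hinj
  rw [Finset.card_univ, ← hT.card_edgeFinset] at hcard
  omega

lemma bddAbove_minBalCutrank {V : Type*} [Finite V] (G : SimpleGraph V) :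
    BddAbove {m | ∃ S : Finset V, 2 ≤ S.card ∧ minBalCutrank G S = m} :=
  (Set.finite_range (minBalCutrank G)).bddAbove.mono <| by
    rintro _ ⟨S, -, rfl⟩
    exact Set.mem_range_self S

variable {V : Type*} [Fintype V] {G : SimpleGraph V}

namespace RankDecomp

variable {d : RankDecomp V} {u : Fin d.n} {S : Finset V}

lemma exists_adj_mem_side {x : V} (hx : d.leaf x ≠ u) : ∃ v, d.tree.Adj u v ∧ x ∈ d.side v u := by
  obtain ⟨p, hp⟩ := d.isTree.connected.exists_isPath u (d.leaf x)
  cases p with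
  | nil => exact absurd rfl hx
  | @cons _ v _ huv q =>
    have hu := ((SimpleGraph.Walk.cons_isPath_iff huv q).1 hp).2
    refine ⟨v, huv, mem_side.2 (SimpleGraph.Reachable.symm ?_)⟩
    exact SimpleGraph.reachable_deleteEdges_iff_exists_walk.2
      ⟨q, fun h => hu (q.snd_mem_support_of_mem_edges h)⟩

lemma subset_filter_union_biUnion_side (d : RankDecomp V) (u : Fin d.n) (S : Finset V) :
    S ⊆ Finset.univ.filter (d.leaf · = u) ∪ (d.tree.neighborFinset u).biUnion (S ∩ d.side · u) := by
  intro x hx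
  rw [Finset.mem_union, Finset.mem_filter_univ, or_iff_not_imp_left, Finset.mem_biUnion]
  intro hxu
  obtain ⟨v, huv, hv⟩ := exists_adj_mem_side hxu
  exact ⟨v, (d.tree.mem_neighborFinset u v).2 huv, Finset.mem_inter.2 ⟨hx, hv⟩⟩

lemma exists_adj_card_le_three_mul (d : RankDecomp V) (u : Fin d.n) (hS : 2 ≤ S.card) :
    ∃ v, d.tree.Adj u v ∧ S.card ≤ 3 * (S ∩ d.side v u).card := by
  by_contra! h
  have hcover := (Finset.card_le_card (d.subset_filter_union_biUnion_side u S)).trans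
    (Finset.card_union_le _ _)
  have hsides := Finset.card_biUnion_le_card_mul (d.tree.neighborFinset u) (S ∩ d.side · u)
    ((S.card - 1) / 3) fun v hv => by
      have := h v ((d.tree.mem_neighborFinset u v).1 hv)
      omega
  have hleaf : (Finset.univ.filter (d.leaf · = u)).card ≤ 1 := Finset.card_le_one.2
    fun x hx y hy => d.leafInj <|
      ((Finset.mem_filter_univ x).1 hx).trans ((Finset.mem_filter_univ y).1 hy).symm
  rw [SimpleGraph.card_neighborFinset_eq_degree] at hsides
  obtain ⟨x, hx⟩ | hu := (Finset.univ.filter (d.leaf · = u)).eq_empty_or_nonempty.symm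
  · have hdeg := d.leafDeg x
    rw [(Finset.mem_filter_univ x).1 hx] at hdeg
    rw [hdeg] at hsides
    omega
  · have := hsides.trans (Nat.mul_le_mul_right _ (d.subcubic u))
    rw [hu, Finset.card_empty] at hcover
    omega

lemma card_inter_side_add {v : Fin d.n} (huv : d.tree.Adj u v) (S : Finset V) :
    (S ∩ d.side u v).card + (S ∩ d.side v u).card = S.card := by
  rw [side_swap huv, ← Finset.sdiff_eq_inter_compl, Finset.card_inter_add_card_sdiff]

lemma isBalancedPartitionOf_inter_side {v : Fin d.n} (huv : d.tree.Adj u v)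
    (hu : 3 * (S ∩ d.side u v).card ≤ 2 * S.card) (hv : 3 * (S ∩ d.side v u).card ≤ 2 * S.card) :
    IsBalancedPartitionOf S (S ∩ d.side u v) (S ∩ d.side v u) := by
  refine ⟨?_, ?_, hu, hv⟩ <;> rw [side_swap huv]
  · rw [← Finset.inter_union_distrib_left, Finset.union_compl, Finset.inter_univ]
  · exact disjoint_compl_right.mono Finset.inter_subset_right Finset.inter_subset_right

lemma exists_isBalancedPartitionOf_inter_side (d : RankDecomp V) (hS : 2 ≤ S.card) :
    ∃ u v, d.tree.Adj u v ∧ IsBalancedPartitionOf S (S ∩ d.side u v) (S ∩ d.side v u) := by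
  obtain ⟨u, hu⟩ := exists_sink_of_isTree d.isTree
    (R := fun u v => d.tree.Adj u v ∧ 2 * S.card < 3 * (S ∩ d.side v u).card)
    fun u v huv hvu => by
      have := card_inter_side_add huv.1 S
      have := huv.2
      have := hvu.2
      omega
  obtain ⟨v, huv, hv⟩ := d.exists_adj_card_le_three_mul u hS
  have := card_inter_side_add huv S
  have hle : 3 * (S ∩ d.side v u).card ≤ 2 * S.card := not_lt.1 fun h => hu v huv ⟨huv, h⟩
  exact ⟨u, v, huv, isBalancedPartitionOf_inter_side huv (by omega) (by omega)⟩

lemma widthLE.rankwidth_le {k : ℕ} (hd : d.widthLE G k) : rankwidth G ≤ k :=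
  Nat.sInf_le ⟨d, hd⟩

lemma exists_widthLE_rankwidth {k : ℕ} (hd : d.widthLE G k) :
    ∃ d' : RankDecomp V, d'.widthLE G (rankwidth G) :=
  Nat.sInf_mem (s := {k | ∃ d : RankDecomp V, d.widthLE G k}) ⟨k, d, hd⟩

theorem widthLE.minBalCutrank_le {k : ℕ} (hd : d.widthLE G k) (hS : 2 ≤ S.card) :
    minBalCutrank G S ≤ k := by
  obtain ⟨u, v, huv, hbal⟩ := d.exists_isBalancedPartitionOf_inter_side hS
  calc minBalCutrank G S ≤ cutrank G (S ∩ d.side u v) (S ∩ d.side v u) := hbal.minBalCutrank_le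
    _ ≤ cutrank G (d.side u v) (d.side v u) :=
      cutrank_mono G Finset.inter_subset_right Finset.inter_subset_right
    _ ≤ k := hd u v huv

end RankDecomp

end UpperBound

theorem rankwidth_le_and_ge_max_minBalCutrank_general
    {V : Type*} [Fintype V] (G : SimpleGraph V) (hV : 2 ≤ Fintype.card V) :
    rankwidth G ≤ 14 * sSup {m | ∃ S : Finset V, 2 ≤ S.card ∧ minBalCutrank G S = m} ∧
      sSup {m | ∃ S : Finset V, 2 ≤ S.card ∧ minBalCutrank G S = m} ≤ rankwidth G := by
  obtain ⟨d, hd⟩ := exists_widthLE_of_forall_isSplit hV fun X hX hρ =>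
    exists_isSplit_cutrankFun_le (G := G)
      (fun S hS => le_csSup (bddAbove_minBalCutrank G) ⟨S, hS, rfl⟩) hX hρ
  obtain ⟨d', hd'⟩ := RankDecomp.exists_widthLE_rankwidth hd
  refine ⟨hd.rankwidth_le, csSup_le' ?_⟩
  rintro _ ⟨S, hS, rfl⟩
  exact hd'.minBalCutrank_le hS

/-- For every graph `G` with at least 2 vertices, writing `M` for the maximum of
`min-bal-cutrank(H)` over induced subgraphs `H = G[S]` with at least 2 vertices,
we have `(1/72)·rankwidth(G) ≤ M ≤ rankwidth(G)`. -/
theorem rankwidth_le_and_ge_max_minBalCutrank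
    {V : Type*} [Fintype V] (G : SimpleGraph V) (hV : 2 ≤ Fintype.card V) :
    rankwidth G ≤ 72 * sSup {m | ∃ S : Finset V, 2 ≤ S.card ∧ minBalCutrank G S = m} ∧
      sSup {m | ∃ S : Finset V, 2 ≤ S.card ∧ minBalCutrank G S = m} ≤ rankwidth G :=
  (rankwidth_le_and_ge_max_minBalCutrank_general G hV).imp_left
    fun h => h.trans (Nat.mul_le_mul_right _ (by norm_num))
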